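/- If f and g are feasible b-matchings of G with Σ_{i ∈ V} x_i(f) < Σ_{i ∈ V} x_i(g), then there exist a vertex v with x_v(f) < x_v(g) and a feasible b-matching h such that x_i(h) ≥ x_i(f) for every vertex i and x_v(h) ≥ x_v(f) + 1. (Exchange property of the b-matching polymatroid of degree vectors.) -/

import Mathlib

variable {V : Type*} [Fintype V] [DecidableEq V]

/-- The utility of vertex `i` under the b-matching `f`: the total weight of edges incident to `i`. -/
def bmUtil (G : SimpleGraph V) [DecidableRel G.Adj] (f : Sym2 V → ℕ) (i : V) : ℕ :=
  ∑ e ∈ G.edgeFinset.filter (fun e => i ∈ e), f e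

/-- `f` is a feasible b-matching for `(G, b)`. -/
def BMFeasible (G : SimpleGraph V) [DecidableRel G.Adj] (b : V → ℕ) (f : Sym2 V → ℕ) : Prop :=
  ∀ i, bmUtil G f i ≤ b i

/-- The size of a b-matching: the total weight over all edges. -/
def bmSize (G : SimpleGraph V) [DecidableRel G.Adj] (f : Sym2 V → ℕ) : ℕ :=
  ∑ e ∈ G.edgeFinset, f e

/-- `f` is a maximum b-matching for `(G, b)`. -/
def IsMaxBM (G : SimpleGraph V) [DecidableRel G.Adj] (b : V → ℕ) (f : Sym2 V → ℕ) : Prop :=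
  BMFeasible G b f ∧ ∀ g, BMFeasible G b g → bmSize G g ≤ bmSize G f

/-- Underdemanded vertices: unsaturated in at least one maximum b-matching. -/
def VU (G : SimpleGraph V) [DecidableRel G.Adj] (b : V → ℕ) : Set V :=
  {i | ∃ f, IsMaxBM G b f ∧ bmUtil G f i < b i}

/-- Overdemanded vertices: not underdemanded, with at least one underdemanded neighbor. -/
def VO (G : SimpleGraph V) [DecidableRel G.Adj] (b : V → ℕ) : Set V :=
  {i | i ∉ VU G b ∧ ∃ j ∈ VU G b, G.Adj i j}

/-- Perfectly demanded vertices. -/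
def VP (G : SimpleGraph V) [DecidableRel G.Adj] (b : V → ℕ) : Set V :=
  {i | i ∉ VU G b ∧ i ∉ VO G b}

/- Regard `f` as the current matching and `g` as a better one. From a vertex `v` with
`x_v(f) < x_v(g)`, walk along a trail that alternately raises edges where `f < g` and lowers edges
where `f > g`. Either some raised edge ends at a vertex `w` without pushing its utility above
`x_w(g)`, and switching `f` along the trail up to there is the desired augmentation, or the trail
reaches a vertex `t` with `x_t(g) < x_t(f)` after a lowered edge. In the latter case, switching `g`
(not `f`) along the trail moves one unit of utility from `v` to `t`; this keeps the total utility of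
`g` and the bound `x(f) ⊔ x(g)`, and brings `g` closer to `f`. Closeness is measured by inclusion of
the finite lattice intervals `uIcc f g`. -/

open Finset

section Interval

theorem uIcc_left_induction {α : Type*} [DistribLattice α] [LocallyFiniteOrder α] (g : α)
    {P : α → Prop} (step : ∀ f, (∀ k ∈ uIcc f g, k ≠ f → P k) → P f) (f : α) : P f := by
  induction hI : uIcc f g using Finset.strongInduction generalizing f with
  | H I ih =>
    subst hI
    refine step f fun k hk hne ↦ ih _ ?_ k rfl
    refine ssubset_of_subset_of_ne (uIcc_subset_uIcc_right hk) fun heq ↦ hne ?_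
    exact eq_of_mem_uIcc_of_mem_uIcc hk (heq ▸ left_mem_uIcc)

variable {ι : Type*} [Fintype ι] [DecidableEq ι]

theorem exists_mem_uIcc_add_eq_add {f g k : ι → ℕ}
    (hk : k ∈ uIcc f g) : ∃ k' ∈ uIcc f g, k + k' = f + g := by
  obtain ⟨hlo, hhi⟩ := mem_Icc.1 hk
  refine ⟨f + g - k, mem_Icc.2 ⟨fun e ↦ ?_, fun e ↦ ?_⟩, funext fun e ↦ ?_⟩ <;>
  · have := hlo e
    have := hhi e
    simp only [Pi.add_apply, Pi.sub_apply, Pi.inf_apply, Pi.sup_apply] at *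
    omega

theorem add_single_mem_uIcc {f g : ι → ℕ} {e : ι}
    (he : f e < g e) : f + Pi.single e 1 ∈ uIcc f g := by
  refine mem_Icc.2 ⟨inf_le_left.trans le_self_add, fun e' ↦ ?_⟩
  obtain rfl | hne := eq_or_ne e' e
  · simpa using he
  · simp [hne]

theorem exists_mem_uIcc_add_single_eq {f g : ι → ℕ} {e : ι} (he : g e < f e) :
    ∃ k ∈ uIcc f g, k + Pi.single e 1 = f := by
  have hle : Pi.single e 1 ≤ f :=
    update_le_iff.2 ⟨Nat.one_le_of_lt he, fun _ _ ↦ Nat.zero_le _⟩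
  refine ⟨f - Pi.single e 1, mem_Icc.2 ⟨fun e' ↦ ?_, tsub_le_self.trans le_sup_left⟩,
    tsub_add_cancel_of_le hle⟩
  obtain rfl | hne := eq_or_ne e' e
  · simpa using Or.inr (Nat.le_sub_one_of_lt he)
  · simp [hne]

end Interval

section Transfer

variable {ι : Type*} [DecidableEq ι] {x y z : ι → ℕ} {s t u : ι}

theorem lt_of_add_single_eq_add_single (h : y + Pi.single t 1 = x + Pi.single u 1)
    (ht : x t ≤ z t) (hu : x u < z u) : y t < z t := by
  have hyt := congrFun h t
  obtain rfl | hne := eq_or_ne t u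
  · simp only [Pi.add_apply, Pi.single_eq_same] at hyt
    omega
  · simp only [Pi.add_apply, Pi.single_eq_same, Pi.single_eq_of_ne hne] at hyt
    omega

theorem le_sup_of_add_single_eq_add_single (h : y + Pi.single t 1 = x + Pi.single u 1)
    (hu : x u < z u) : y ≤ x ⊔ z := by
  intro i
  have hle : y i ≤ x i + Pi.single (M := fun _ ↦ ℕ) u 1 i :=
    (Nat.le_add_right _ _).trans (congrFun h i).le
  obtain rfl | hne := eq_or_ne i u
  · rw [Pi.single_eq_same] at hle
    exact le_sup_of_le_right (hle.trans hu)
  · rw [Pi.single_eq_of_ne hne] at hle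
    exact le_sup_of_le_left hle

theorem le_sup_of_eq_add_single_add_single (h : y = x + Pi.single s 1 + Pi.single t 1)
    (hs : x s < z s) (ht : y t ≤ z t) : y ≤ x ⊔ z := by
  intro i
  obtain rfl | hit := eq_or_ne i t
  · exact le_sup_of_le_right ht
  obtain rfl | his := eq_or_ne i s
  · simpa [h, hit] using hs
  · simp [h, hit, his]

end Transfer

section Utility

variable {G : SimpleGraph V} [DecidableRel G.Adj] {f g : Sym2 V → ℕ} {u w : V}

theorem bmUtil_add (f g : Sym2 V → ℕ) : bmUtil G (f + g) = bmUtil G f + bmUtil G g :=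
  funext fun _ ↦ sum_add_distrib

theorem bmUtil_single (h : G.Adj u w) :
    bmUtil G (Pi.single s(u, w) 1) = Pi.single u 1 + Pi.single w 1 := by
  ext i
  have hne : u ≠ w := h.ne
  simp only [bmUtil, sum_pi_single', mem_filter, SimpleGraph.mem_edgeFinset,
    SimpleGraph.mem_edgeSet, Sym2.mem_iff, h, true_and]
  simp only [Pi.add_apply, Pi.single_apply]
  split_ifs <;> simp_all

theorem exists_adj_lt_of_bmUtil_lt (h : bmUtil G f u < bmUtil G g u) :
    ∃ w, G.Adj u w ∧ f s(u, w) < g s(u, w) := by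
  obtain ⟨e, he, hlt⟩ := exists_lt_of_sum_lt h
  obtain ⟨hadj, w, rfl⟩ := mem_filter.1 he
  exact ⟨w, SimpleGraph.mem_edgeFinset.1 hadj, hlt⟩

theorem exists_mem_uIcc_bmUtil_eq_add (h : bmUtil G f u < bmUtil G g u) :
    ∃ k ∈ uIcc f g, ∃ w, bmUtil G k = bmUtil G f + Pi.single u 1 + Pi.single w 1 := by
  obtain ⟨w, hadj, hlt⟩ := exists_adj_lt_of_bmUtil_lt h
  exact ⟨_, add_single_mem_uIcc hlt, w, by rw [bmUtil_add, bmUtil_single hadj, add_assoc]⟩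

theorem exists_mem_uIcc_bmUtil_add_eq (h : bmUtil G g u < bmUtil G f u) :
    ∃ k ∈ uIcc f g, ∃ w, bmUtil G k + Pi.single u 1 + Pi.single w 1 = bmUtil G f := by
  obtain ⟨w, hadj, hlt⟩ := exists_adj_lt_of_bmUtil_lt h
  obtain ⟨k, hk, rfl⟩ := exists_mem_uIcc_add_single_eq hlt
  exact ⟨k, hk, w, by rw [bmUtil_add, bmUtil_single hadj, add_assoc]⟩

theorem exists_mem_uIcc_bmUtil_reflect {k : Sym2 V → ℕ} (hk : k ∈ uIcc f g)
    (hku : bmUtil G k + Pi.single w 1 = bmUtil G f + Pi.single u 1) :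
    ∃ k' ∈ uIcc f g, bmUtil G k' + Pi.single u 1 = bmUtil G g + Pi.single w 1 := by
  obtain ⟨k', hk', hadd⟩ := exists_mem_uIcc_add_eq_add hk
  refine ⟨k', hk', add_left_cancel (a := bmUtil G k) ?_⟩
  calc bmUtil G k + (bmUtil G k' + Pi.single u 1)
      = bmUtil G f + Pi.single u 1 + bmUtil G g := by
        rw [← add_assoc, ← bmUtil_add, hadd, bmUtil_add, add_right_comm]
    _ = bmUtil G k + (bmUtil G g + Pi.single w 1) := by rw [← hku]; ac_rfl

/- The two outcomes are the end of an alternating trail from `u` after a raised edge at `w` and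
after a lowered edge at `t`. -/
theorem exists_alternating_trail (hu : bmUtil G f u < bmUtil G g u) :
    (∃ k w, bmUtil G k = bmUtil G f + Pi.single u 1 + Pi.single w 1 ∧
      bmUtil G k w ≤ bmUtil G g w) ∨
    ∃ k ∈ uIcc f g, ∃ t, bmUtil G k + Pi.single t 1 = bmUtil G f + Pi.single u 1 ∧
      bmUtil G g t < bmUtil G f t := by
  induction f using uIcc_left_induction g generalizing u with
  | step f ih =>
    obtain ⟨f₁, hf₁, w, hw⟩ := exists_mem_uIcc_bmUtil_eq_add hu
    by_cases hwg : bmUtil G f₁ w ≤ bmUtil G g w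
    · exact Or.inl ⟨f₁, w, hw, hwg⟩
    obtain ⟨f₂, hf₂, t, ht⟩ := exists_mem_uIcc_bmUtil_add_eq (not_le.1 hwg)
    have hmove : bmUtil G f₂ + Pi.single t 1 = bmUtil G f + Pi.single u 1 :=
      add_right_cancel (b := Pi.single w 1) (by rw [add_right_comm, ht, hw])
    have hf₂_mem : f₂ ∈ uIcc f g := uIcc_subset_uIcc_right hf₁ hf₂
    by_cases htg : bmUtil G g t < bmUtil G f t
    · exact Or.inr ⟨f₂, hf₂_mem, t, hmove, htg⟩
    have hf₂_ne : f₂ ≠ f := by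
      rintro rfl
      have hf₁_eq : f₁ = f₂ := eq_of_mem_uIcc_of_mem_uIcc hf₁ hf₂
      simpa [hf₁_eq, add_assoc] using congrFun hw u
    have ht_lt : bmUtil G f₂ t < bmUtil G g t :=
      lt_of_add_single_eq_add_single hmove (not_lt.1 htg) hu
    obtain ⟨k, w', hk, hkg⟩ | ⟨k, hk, s, hks, hs⟩ := ih f₂ hf₂_mem hf₂_ne ht_lt
    · exact Or.inl ⟨k, w', by rw [hk, hmove], hkg⟩
    · have hf₂_le := le_sup_of_add_single_eq_add_single hmove hu
      exact Or.inr ⟨k, uIcc_subset_uIcc_right hf₂_mem hk, s, hks.trans hmove,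
        (lt_sup_iff.1 (hs.trans_le (hf₂_le s))).resolve_right (lt_irrefl _)⟩

theorem exists_bmUtil_lt_and_le_sup (hlt : ∑ i, bmUtil G f i < ∑ i, bmUtil G g i) :
    ∃ h, bmUtil G f < bmUtil G h ∧ bmUtil G h ≤ bmUtil G f ⊔ bmUtil G g := by
  induction g using uIcc_left_induction f with
  | step g ih =>
    obtain ⟨v, -, hv⟩ := exists_lt_of_sum_lt hlt
    obtain ⟨h, w, hw, hwg⟩ | ⟨k, hk, t, hkt, ht⟩ := exists_alternating_trail hv
    · refine ⟨h, Pi.lt_def.2 ⟨?_, v, ?_⟩, ?_⟩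
      · simp [hw, add_assoc]
      · simp [hw, add_assoc]
      · exact le_sup_of_eq_add_single_add_single hw hv hwg
    obtain ⟨g', hg', hmove⟩ := exists_mem_uIcc_bmUtil_reflect hk hkt
    have hne : g' ≠ g := by
      have hvt : v ≠ t := by
        rintro rfl
        exact lt_asymm ht hv
      rintro rfl
      simpa [hvt] using congrFun hmove v
    have hsum : ∑ i, bmUtil G g' i = ∑ i, bmUtil G g i := by
      simpa [sum_add_distrib] using congrArg (fun x : V → ℕ ↦ ∑ i, x i) hmove
    have hle : bmUtil G g' ≤ bmUtil G g ⊔ bmUtil G f :=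
      le_sup_of_add_single_eq_add_single hmove ht
    obtain ⟨h, hfh, hh⟩ := ih g' (uIcc_comm f g ▸ hg') hne (hsum ▸ hlt)
    exact ⟨h, hfh, hh.trans (sup_le le_sup_left (hle.trans_eq (sup_comm _ _)))⟩

end Utility

/-- exchange property of the polymatroid of degree vectors of feasible
b-matchings. -/
theorem stmt_16 (G : SimpleGraph V) [DecidableRel G.Adj] (b : V → ℕ)
    (f g : Sym2 V → ℕ) (hf : BMFeasible G b f) (hg : BMFeasible G b g)
    (hlt : ∑ i, bmUtil G f i < ∑ i, bmUtil G g i) :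
    ∃ v : V, bmUtil G f v < bmUtil G g v ∧
      ∃ h : Sym2 V → ℕ, BMFeasible G b h ∧
        (∀ i, bmUtil G f i ≤ bmUtil G h i) ∧
        bmUtil G f v + 1 ≤ bmUtil G h v := by
  obtain ⟨h, hlt, hle⟩ := exists_bmUtil_lt_and_le_sup hlt
  obtain ⟨hfh, v, hv⟩ := Pi.lt_def.1 hlt
  have hvg : bmUtil G f v < bmUtil G g v :=
    (lt_sup_iff.1 (hv.trans_le (hle v))).resolve_left (lt_irrefl _)
  exact ⟨v, hvg, h, fun i ↦ (hle i).trans (sup_le (hf i) (hg i)), hfh, hv⟩
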